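/- Let p̄ = (p(1), p(2), …) satisfy 0 ≤ p(i) < 1 and ∏_{i=1}^∞ (1 − p(i)) > 0. Then for every first-order sentence ψ of the language L_≤, limsup_{n→∞} Prob(n,p̄;ψ) − liminf_{n→∞} Prob(n,p̄;ψ) < 1. -/

import Mathlib

open FirstOrder Filter

namespace RandomGraph

/-- The set of potential edges of a graph on `Fin n` (pairs `(v,w)` with `v < w`).
Vertex `v : Fin n` represents the number `v + 1` of the interval `[n] = {1, …, n}`. -/
abbrev EdgeIdx (n : ℕ) := {e : Fin n × Fin n // e.1 < e.2}

/-- An outcome of the random graph on `[n]`: a choice of which potential edges are present. -/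
abbrev Sample (n : ℕ) := EdgeIdx n → Bool

/-- Adjacency of two vertices (described by their values in `Fin n`) in the outcome `ω`. -/
def adjVal {n : ℕ} (ω : Sample n) (a b : ℕ) : Prop :=
  ∃ e : EdgeIdx n, ω e = true ∧
    ((e.1.1.val = a ∧ e.1.2.val = b) ∨ (e.1.1.val = b ∧ e.1.2.val = a))

/-- Adjacency of two vertices in the outcome `ω`. -/
def sampleAdj {n : ℕ} (ω : Sample n) (v w : Fin n) : Prop := adjVal ω v.val w.val

/-- The probability of the outcome `ω` in the model `G(n, p̄)`: each pair of distinct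
vertices at distance `d` is an edge with probability `p d`, independently.  (The value `p 0` is
never used, since distinct vertices are at distance at least 1.) -/
noncomputable def sampleWeight (p : ℕ → ℝ) {n : ℕ} (ω : Sample n) : ℝ :=
  ∏ e : EdgeIdx n,
    (if ω e then p (e.1.2.val - e.1.1.val) else 1 - p (e.1.2.val - e.1.1.val))

/-- The probability of the outcome `ω` in the circular model `C(n, p̄)`: vertices `v, w` are
adjacent with probability `p (min |v-w| (n - |v-w|))`, independently. -/
noncomputable def cWeight (p : ℕ → ℝ) {n : ℕ} (ω : Sample n) : ℝ :=
  ∏ e : EdgeIdx n,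
    (if ω e then p (min (e.1.2.val - e.1.1.val) (n - (e.1.2.val - e.1.1.val)))
      else 1 - p (min (e.1.2.val - e.1.1.val) (n - (e.1.2.val - e.1.1.val))))

open scoped Classical in
/-- The probability of the event `P` in the random graph `G(n, p̄)`. -/
noncomputable def Pr (p : ℕ → ℝ) (n : ℕ) (P : Sample n → Prop) : ℝ :=
  ∑ ω : Sample n, if P ω then sampleWeight p ω else 0

open scoped Classical in
/-- The probability of the event `P` in the circular random graph `C(n, p̄)`. -/
noncomputable def cPr (p : ℕ → ℝ) (n : ℕ) (P : Sample n → Prop) : ℝ :=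
  ∑ ω : Sample n, if P ω then cWeight p ω else 0

/-! ### The language `L` of graphs (also used as the language `L^c`) -/

/-- An outcome `ω` of the random graph, viewed as a structure of `FirstOrder.Language.graph`,
the language with a single binary adjacency predicate. -/
def graphStructure {n : ℕ} (ω : Sample n) : Language.graph.Structure (Fin n) where
  RelMap | .adj => fun x => sampleAdj ω (x 0) (x 1)

/-- Satisfaction of a sentence of the language `L` in the outcome `ω`. -/
def SatL {n : ℕ} (ω : Sample n) (ψ : Language.graph.Sentence) : Prop :=
  @Language.Sentence.Realize _ _ (graphStructure ω) ψ

/-- `Prob(n, p̄; ψ)` for a sentence `ψ` of the language `L`. -/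
noncomputable def ProbL (p : ℕ → ℝ) (n : ℕ) (ψ : Language.graph.Sentence) : ℝ :=
  Pr p n fun ω => SatL ω ψ

/-- The probability that `C(n, p̄)` satisfies a sentence `ψ` of the language `L^c = L`. -/
noncomputable def cProbL (p : ℕ → ℝ) (n : ℕ) (ψ : Language.graph.Sentence) : ℝ :=
  cPr p n fun ω => SatL ω ψ

/-! ### The language `L₊` -/

/-- The constants of the language `L₊`: the first element `1` and the last element `n`. -/
inductive plusFunc : ℕ → Type
  | one : plusFunc 0
  | last : plusFunc 0

/-- The relations of `L₊`: adjacency and successor. -/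
inductive plusRel : ℕ → Type
  | adj : plusRel 2
  | succ : plusRel 2

/-- The language `L₊` with adjacency, successor (`x = y + 1`), and constants `1` and `n`. -/
def Lplus : Language := ⟨plusFunc, plusRel⟩

/-- An outcome `ω` of the random graph on `[m+1]`, as an `L₊`-structure. -/
def plusStructure {m : ℕ} (ω : Sample (m + 1)) : Lplus.Structure (Fin (m + 1)) where
  funMap | .one => fun _ => 0 | .last => fun _ => Fin.last m
  RelMap
    | .adj => fun x => sampleAdj ω (x 0) (x 1)
    | .succ => fun x => (x 0).val = (x 1).val + 1

/-- `Prob(n, p̄; ψ)` for a sentence `ψ` of `L₊` (set to `0` in the irrelevant case `n = 0`,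
where the constants cannot be interpreted). -/
noncomputable def ProbPlus (p : ℕ → ℝ) : ℕ → Lplus.Sentence → ℝ
  | 0, _ => 0
  | (m + 1), ψ => Pr p (m + 1) fun ω => @Language.Sentence.Realize _ _ (plusStructure ω) ψ

/-! ### The language `L≤` -/

/-- The relations of `L≤`: adjacency and linear order. -/
inductive leRel : ℕ → Type
  | adj : leRel 2
  | le : leRel 2

/-- The language `L≤` with adjacency and a linear order. -/
def Lle : Language := ⟨fun _ => Empty, leRel⟩

/-- An outcome `ω` of the random graph on `[n]`, as an `L≤`-structure. -/
def leStructure {n : ℕ} (ω : Sample n) : Lle.Structure (Fin n) where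
  funMap := fun f _ => Empty.elim f
  RelMap
    | .adj => fun x => sampleAdj ω (x 0) (x 1)
    | .le => fun x => x 0 ≤ x 1

/-- Satisfaction of a sentence of `L≤` in the outcome `ω`. -/
def SatLe {n : ℕ} (ω : Sample n) (ψ : Lle.Sentence) : Prop :=
  @Language.Sentence.Realize _ _ (leStructure ω) ψ

/-- `Prob(n, p̄; ψ)` for a sentence `ψ` of `L≤`. -/
noncomputable def ProbLe (p : ℕ → ℝ) (n : ℕ) (ψ : Lle.Sentence) : ℝ :=
  Pr p n fun ω => SatLe ω ψ

/-! ### The circular languages `L₊^c` and `L≤^c` -/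

/-- The relations of `L₊^c`: adjacency and cyclic successor. -/
inductive plusCRel : ℕ → Type
  | adj : plusCRel 2
  | succ : plusCRel 2

/-- The language `L₊^c`, with adjacency and cyclic successor (`x = y + 1 (mod n)`). -/
def LplusC : Language := ⟨fun _ => Empty, plusCRel⟩

/-- An outcome `ω` of the circular random graph on `[n]`, as an `L₊^c`-structure. -/
def plusCStructure {n : ℕ} (ω : Sample n) : LplusC.Structure (Fin n) where
  funMap := fun f _ => Empty.elim f
  RelMap
    | .adj => fun x => sampleAdj ω (x 0) (x 1)
    | .succ => fun x => (x 0).val = ((x 1).val + 1) % n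

/-- The probability that `C(n, p̄)` satisfies a sentence `ψ` of the language `L₊^c`. -/
noncomputable def cProbPlus (p : ℕ → ℝ) (n : ℕ) (ψ : LplusC.Sentence) : ℝ :=
  cPr p n fun ω => @Language.Sentence.Realize _ _ (plusCStructure ω) ψ

/-- The relations of `L≤^c`: adjacency and the ternary clockwise-order predicate. -/
inductive cycRel : ℕ → Type
  | adj : cycRel 2
  | btw : cycRel 3

/-- The language `L≤^c`, with adjacency and the ternary clockwise-order predicate `C`. -/
def Lcyc : Language := ⟨fun _ => Empty, cycRel⟩

/-- `C(a, b, c)`: `a ≤ b ≤ c` holds after some cyclic permutation of `(a, b, c)`. -/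
def cyclicBtw {n : ℕ} (a b c : Fin n) : Prop :=
  (a ≤ b ∧ b ≤ c) ∨ (b ≤ c ∧ c ≤ a) ∨ (c ≤ a ∧ a ≤ b)

/-- An outcome `ω` of the circular random graph on `[n]`, as an `L≤^c`-structure. -/
def cycStructure {n : ℕ} (ω : Sample n) : Lcyc.Structure (Fin n) where
  funMap := fun f _ => Empty.elim f
  RelMap
    | .adj => fun x => sampleAdj ω (x 0) (x 1)
    | .btw => fun x => cyclicBtw (x 0) (x 1) (x 2)

/-- Satisfaction of a sentence of `L≤^c` in the outcome `ω`. -/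
def SatCyc {n : ℕ} (ω : Sample n) (ψ : Lcyc.Sentence) : Prop :=
  @Language.Sentence.Realize _ _ (cycStructure ω) ψ

/-- The probability that `C(n, p̄)` satisfies a sentence `ψ` of the language `L≤^c`. -/
noncomputable def cProbCyc (p : ℕ → ℝ) (n : ℕ) (ψ : Lcyc.Sentence) : ℝ :=
  cPr p n fun ω => SatCyc ω ψ

/-!
Call two ordered graphs equivalent if Duplicator wins the `k`-round Ehrenfeucht–Fraïssé game on
them, where `k` is the quantifier rank of `ψ`. There are finitely many classes; the ordered sum
makes them a monoid, and this monoid is aperiodic, since long sums of copies of one graph are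
equivalent. In the submonoid of classes that occur with positive probability, an element `z` of
the minimal two-sided ideal therefore satisfies `z * t * z = z` for all `t`.

Fix a graph of class `z` on `[a]`. With probability at least some `δ > 0` independent of `n`, the
first `a` and the last `a` vertices of `G(n, p̄)` both carry this graph and neither block is joined
to the rest: the vertices on one side of a given vertex are at distinct distances from it, so it
has no neighbours among them with probability at least `∏ (1 - p i)`. Then `G(n, p̄)` has class
`z`. So for all large `n`, `Prob(n, p̄; ψ) ≥ δ` if `ψ` holds in class `z`, and
`Prob(n, p̄; ψ) ≤ 1 - δ` otherwise.
-/

/-! ### Ehrenfeucht–Fraïssé games -/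

section EhrenfeuchtFraisse

universe u v w

open Language.Structure (RelMap)

variable (L : FirstOrder.Language.{u, v}) {M N P : Type*}
  [L.Structure M] [L.Structure N] [L.Structure P]

/-- A partial isomorphism between two structures of a relational language, encoded by its graph:
equality and all relations of `L` are preserved and reflected along `R`. -/
structure IsPartialIso (R : SetRel M N) : Prop where
  eq_iff_eq : ∀ {x x' y y'}, (x, y) ∈ R → (x', y') ∈ R → (x = x' ↔ y = y')
  relMap_iff_relMap : ∀ {n : ℕ} (r : L.Relations n) {x : Fin n → M} {y : Fin n → N},
    (∀ i, (x i, y i) ∈ R) → (RelMap r x ↔ RelMap r y)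

/-- Duplicator has a winning strategy in the `k`-round Ehrenfeucht–Fraïssé game on `M` and `N`
in which the pairs of `R` have already been played. Infinitely many pairs are allowed, so that
the graph of an isomorphism is a position. -/
def DuplicatorWins : ℕ → SetRel M N → Prop
  | 0, R => IsPartialIso L R
  | k + 1, R => IsPartialIso L R ∧ (∀ x, ∃ y, DuplicatorWins k (insert (x, y) R)) ∧
      ∀ y, ∃ x, DuplicatorWins k (insert (x, y) R)

variable {L} {k l r : ℕ} {R S : SetRel M N} {T : SetRel N P}

namespace IsPartialIso

theorem anti (h : IsPartialIso L R) (hSR : S ⊆ R) : IsPartialIso L S where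
  eq_iff_eq hx hy := h.eq_iff_eq (hSR hx) (hSR hy)
  relMap_iff_relMap r _ _ hxy := h.relMap_iff_relMap r fun i => hSR (hxy i)

theorem inv (h : IsPartialIso L R) : IsPartialIso L R.inv where
  eq_iff_eq hx hy := (h.eq_iff_eq hx hy).symm
  relMap_iff_relMap r _ _ hxy := (h.relMap_iff_relMap r hxy).symm

theorem comp (hR : IsPartialIso L R) (hT : IsPartialIso L T) : IsPartialIso L (R.comp T) where
  eq_iff_eq := by
    rintro x x' z z' ⟨y, hxy, hyz⟩ ⟨y', hxy', hyz'⟩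
    exact (hR.eq_iff_eq hxy hxy').trans (hT.eq_iff_eq hyz hyz')
  relMap_iff_relMap r x z hxz := by
    choose y hxy hyz using hxz
    exact (hR.relMap_iff_relMap r hxy).trans (hT.relMap_iff_relMap r hyz)

theorem graph (f : M ≃[L] N) : IsPartialIso L (Function.graph f) where
  eq_iff_eq := by
    rintro x x' y y' (rfl : f x = y) (rfl : f x' = y')
    exact f.injective.eq_iff.symm
  relMap_iff_relMap r x y hxy := by
    obtain rfl : f ∘ x = y := funext hxy
    exact (f.map_rel r x).symm

end IsPartialIso

namespace DuplicatorWins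

theorem isPartialIso (h : DuplicatorWins L k R) : IsPartialIso L R := by
  cases k with
  | zero => exact h
  | succ k => exact h.1

theorem anti (h : DuplicatorWins L k R) (hSR : S ⊆ R) : DuplicatorWins L k S := by
  induction k generalizing R S with
  | zero => exact IsPartialIso.anti h hSR
  | succ k ih =>
    obtain ⟨hR, forth, back⟩ := h
    exact ⟨hR.anti hSR, fun x => (forth x).imp fun _ hy => ih hy (Set.insert_subset_insert hSR),
      fun y => (back y).imp fun _ hx => ih hx (Set.insert_subset_insert hSR)⟩

theorem of_succ (h : DuplicatorWins L (k + 1) R) : DuplicatorWins L k R := by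
  induction k generalizing R with
  | zero => exact h.1
  | succ k ih =>
    obtain ⟨hR, forth, back⟩ := h
    exact ⟨hR, fun x => (forth x).imp fun _ hy => ih hy, fun y => (back y).imp fun _ hx => ih hx⟩

theorem of_le (h : DuplicatorWins L l R) (hkl : k ≤ l) : DuplicatorWins L k R := by
  induction l, hkl using Nat.le_induction with
  | base => exact h
  | succ l _ ih => exact ih h.of_succ

theorem inv (h : DuplicatorWins L k R) : DuplicatorWins L k R.inv := by
  induction k generalizing R with
  | zero => exact IsPartialIso.inv h
  | succ k ih =>
    obtain ⟨hR, forth, back⟩ := h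
    have insert_inv_subset (x : M) (y : N) : insert (y, x) R.inv ⊆ SetRel.inv (insert (x, y) R) :=
      Set.insert_subset (Or.inl rfl) fun _ hp => Or.inr hp
    exact ⟨hR.inv, fun y => (back y).imp fun x hx => (ih hx).anti (insert_inv_subset x y),
      fun x => (forth x).imp fun y hy => (ih hy).anti (insert_inv_subset x y)⟩

theorem comp (hR : DuplicatorWins L k R) (hT : DuplicatorWins L k T) :
    DuplicatorWins L k (R.comp T) := by
  induction k generalizing R T with
  | zero => exact IsPartialIso.comp hR hT
  | succ k ih =>
    have insert_comp_subset (x : M) (y : N) (z : P) :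
        insert (x, z) (R.comp T) ⊆ SetRel.comp (insert (x, y) R) (insert (y, z) T) :=
      Set.insert_subset ⟨y, Or.inl rfl, Or.inl rfl⟩
        (SetRel.comp_subset_comp (Set.subset_insert _ _) (Set.subset_insert _ _))
    refine ⟨hR.1.comp hT.1, fun x => ?_, fun z => ?_⟩
    · obtain ⟨y, hxy⟩ := hR.2.1 x
      obtain ⟨z, hyz⟩ := hT.2.1 y
      exact ⟨z, (ih hxy hyz).anti (insert_comp_subset x y z)⟩
    · obtain ⟨y, hyz⟩ := hT.2.2 z
      obtain ⟨x, hxy⟩ := hR.2.2 y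
      exact ⟨x, (ih hxy hyz).anti (insert_comp_subset x y z)⟩

theorem graph (f : M ≃[L] N) (k : ℕ) : DuplicatorWins L k (Function.graph f) := by
  induction k with
  | zero => exact IsPartialIso.graph f
  | succ k ih =>
    refine ⟨.graph f, fun x => ⟨f x, ?_⟩, fun y => ⟨f.symm y, ?_⟩⟩
    · rwa [Set.insert_eq_of_mem (Function.mem_graph.2 rfl)]
    · rwa [Set.insert_eq_of_mem (Function.mem_graph.2 (f.apply_symm_apply y))]

end DuplicatorWins

/-- The largest number of nested quantifiers in a formula. -/
def quantifierRank {α : Type w} : ∀ {n : ℕ}, L.BoundedFormula α n → ℕ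
  | _, .falsum | _, .equal _ _ | _, .rel _ _ => 0
  | _, .imp φ ψ => max (quantifierRank φ) (quantifierRank ψ)
  | _, .all φ => quantifierRank φ + 1

theorem prodMk_realize_mem [L.IsRelational] {α : Type*} {v : α → M} {w : α → N}
    (hvw : ∀ a, (v a, w a) ∈ R) (t : L.Term α) : (t.realize v, t.realize w) ∈ R := by
  cases t with
  | var a => exact hvw a
  | func f _ => exact isEmptyElim f

theorem DuplicatorWins.realize_iff_realize [L.IsRelational] {α : Type*} {n : ℕ}
    {φ : L.BoundedFormula α n} (h : DuplicatorWins L (quantifierRank φ) R)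
    {v : α → M} {w : α → N} {xs : Fin n → M} {ys : Fin n → N}
    (hvw : ∀ a, (v a, w a) ∈ R) (hxy : ∀ i, (xs i, ys i) ∈ R) :
    φ.Realize v xs ↔ φ.Realize w ys := by
  have hvar {n : ℕ} {R : SetRel M N} {xs : Fin n → M} {ys : Fin n → N}
      (hvw : ∀ a, (v a, w a) ∈ R) (hxy : ∀ i, (xs i, ys i) ∈ R) :
      ∀ a, (Sum.elim v xs a, Sum.elim w ys a) ∈ R := Sum.rec hvw hxy
  induction φ generalizing R with
  | falsum => exact Iff.rfl
  | equal t s =>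
    exact h.isPartialIso.eq_iff_eq (prodMk_realize_mem (hvar hvw hxy) t)
      (prodMk_realize_mem (hvar hvw hxy) s)
  | rel r ts =>
    exact h.isPartialIso.relMap_iff_relMap r fun i => prodMk_realize_mem (hvar hvw hxy) (ts i)
  | imp φ ψ ihφ ihψ =>
    exact imp_congr (ihφ (h.of_le (le_max_left _ _)) hvw hxy)
      (ihψ (h.of_le (le_max_right _ _)) hvw hxy)
  | all φ ih =>
    have realize_snoc (x : M) (y : N) (hk : DuplicatorWins L (quantifierRank φ) (insert (x, y) R)) :
        φ.Realize v (Fin.snoc xs x) ↔ φ.Realize w (Fin.snoc ys y) :=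
      ih hk (fun a => Or.inr (hvw a)) fun i =>
        Fin.lastCases (by simp) (fun i => by simpa using Or.inr (hxy i)) i
    obtain ⟨-, forth, back⟩ := h
    refine ⟨fun hM y => ?_, fun hN x => ?_⟩
    · obtain ⟨x, hk⟩ := back y
      exact (realize_snoc x y hk).1 (hM x)
    · obtain ⟨y, hk⟩ := forth x
      exact (realize_snoc x y hk).2 (hN y)

section Finiteness

variable (L) in
/-- The possible isomorphism types of an `r`-tuple in an `L`-structure: which entries coincide,
and which relations hold between them. -/
abbrev AtomicDiagram (r : ℕ) : Type v :=
  (Fin r → Fin r → Prop) × ∀ s : Σ n, L.Relations n, (Fin s.1 → Fin r) → Prop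

variable (L) in
/-- The possible rank-`k` types (in the sense of Hintikka) of an `r`-tuple: its atomic diagram
and, for `k > 0`, the set of rank-`(k - 1)` types of its extensions by one entry. -/
def HintikkaType : ℕ → ℕ → Type v
  | 0, r => AtomicDiagram L r
  | k + 1, r => AtomicDiagram L r × Set (HintikkaType k (r + 1))

theorem finite_hintikkaType [Finite (Σ n, L.Relations n)] (k r : ℕ) :
    Finite (HintikkaType L k r) := by
  induction k generalizing r with
  | zero => exact inferInstanceAs (Finite (AtomicDiagram L r))
  | succ k ih =>
    have := ih (r + 1)
    exact inferInstanceAs (Finite (AtomicDiagram L r × Set (HintikkaType L k (r + 1))))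

variable (L) in
/-- The isomorphism type of the tuple `a`. -/
def atomicDiagram (a : Fin r → M) : AtomicDiagram L r :=
  (fun i j => a i = a j, fun s e => RelMap s.2 (a ∘ e))

variable (L) in
/-- The rank-`k` type of the tuple `a`; two tuples with the same rank-`k` type form a position
of the game that Duplicator wins in `k` rounds. -/
def hintikkaType : (k : ℕ) → {r : ℕ} → (Fin r → M) → HintikkaType L k r
  | 0, _, a => atomicDiagram L a
  | k + 1, r, a =>
    (atomicDiagram L a, Set.range fun x => hintikkaType k (Fin.cons x a : Fin (r + 1) → M))

variable {a : Fin r → M} {b : Fin r → N}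

theorem isPartialIso_range_of_atomicDiagram_eq (h : atomicDiagram L a = atomicDiagram L b) :
    IsPartialIso L (Set.range fun i => (a i, b i)) where
  eq_iff_eq := by
    rintro _ _ _ _ ⟨i, hi⟩ ⟨j, hj⟩
    obtain ⟨rfl, rfl⟩ := Prod.mk.inj hi
    obtain ⟨rfl, rfl⟩ := Prod.mk.inj hj
    exact iff_of_eq (congrFun₂ (congrArg Prod.fst h) i j)
  relMap_iff_relMap {n} s x y hxy := by
    choose e he using hxy
    obtain rfl : a ∘ e = x := funext fun i => congrArg Prod.fst (he i)
    obtain rfl : b ∘ e = y := funext fun i => congrArg Prod.snd (he i)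
    exact iff_of_eq (congrFun₂ (congrArg Prod.snd h) ⟨n, s⟩ e)

theorem insert_range_subset_range_cons {α β : Type*} (a : Fin r → α) (b : Fin r → β)
    (x : α) (y : β) :
    insert (x, y) (Set.range fun i => (a i, b i)) ⊆ Set.range fun i : Fin (r + 1) =>
      ((Fin.cons x a : Fin (r + 1) → α) i, (Fin.cons y b : Fin (r + 1) → β) i) :=
  Set.insert_subset ⟨0, rfl⟩ (Set.range_subset_iff.2 fun i => ⟨i.succ, rfl⟩)

theorem duplicatorWins_of_hintikkaType_eq (h : hintikkaType L k a = hintikkaType L k b) :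
    DuplicatorWins L k (Set.range fun i => (a i, b i)) := by
  induction k generalizing r with
  | zero => exact isPartialIso_range_of_atomicDiagram_eq h
  | succ k ih =>
    obtain ⟨hdiagram, hextensions⟩ := Prod.mk.inj h
    refine ⟨isPartialIso_range_of_atomicDiagram_eq hdiagram, fun x => ?_, fun y => ?_⟩
    · obtain ⟨y, hy⟩ := hextensions.le ⟨x, rfl⟩
      exact ⟨y, (ih hy.symm).anti (insert_range_subset_range_cons a b x y)⟩
    · obtain ⟨x, hx⟩ := hextensions.ge ⟨y, rfl⟩
      exact ⟨x, (ih hx).anti (insert_range_subset_range_cons a b x y)⟩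

end Finiteness

section GameClass

open CategoryTheory (Bundled)

variable (L) in
/-- Two structures are equivalent if Duplicator wins the `k`-round game on them. -/
def gameSetoid (k : ℕ) : Setoid (Bundled.{w} L.Structure) where
  r M N := DuplicatorWins L k (∅ : SetRel M N)
  iseqv :=
    { refl M := (DuplicatorWins.graph (Language.Equiv.refl L M) k).anti (Set.empty_subset _)
      symm h := h.inv
      trans h h' := (h.comp h').anti (Set.empty_subset _) }

variable (L) in
/-- The equivalence classes of `L`-structures with respect to the `k`-round game. -/
def GameClass (k : ℕ) : Type _ := Quotient (gameSetoid.{u, v, w} L k)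

/-- The class of a structure with respect to the `k`-round game. -/
def gameClass (k : ℕ) (M : Bundled.{w} L.Structure) : GameClass L k := Quotient.mk _ M

variable {M N : Bundled.{w} L.Structure}

theorem gameClass_eq_iff : gameClass k M = gameClass k N ↔ DuplicatorWins L k (∅ : SetRel M N) :=
  Quotient.eq

theorem gameClass_eq_of_equiv (f : M ≃[L] N) : gameClass k M = gameClass k N :=
  gameClass_eq_iff.2 ((DuplicatorWins.graph f k).anti (Set.empty_subset _))

theorem realize_iff_of_gameClass_eq [L.IsRelational] {φ : L.Sentence}
    (h : gameClass (quantifierRank φ) M = gameClass (quantifierRank φ) N) :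
    M ⊨ φ ↔ N ⊨ φ :=
  (gameClass_eq_iff.1 h).realize_iff_realize isEmptyElim isEmptyElim

instance finite_gameClass [Finite (Σ n, L.Relations n)] (k : ℕ) :
    Finite (GameClass.{u, v, w} L k) := by
  have := finite_hintikkaType (L := L) k 0
  refine .of_injective (fun c => hintikkaType L k (Fin.elim0 (α := c.out))) fun c d h => ?_
  rw [← c.out_eq, ← d.out_eq]
  exact gameClass_eq_iff.2 ((duplicatorWins_of_hintikkaType_eq h).anti (Set.empty_subset _))

end GameClass

end EhrenfeuchtFraisse

/-! ### Ordered sums of `L≤`-structures -/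

section OrderedSum

universe w

open CategoryTheory (Bundled)
open Language.Structure (RelMap)

section SumPosition

variable {M M' N N' : Type*}

/-- The position in the game on two ordered sums made up of a position in each summand. -/
def sumPosition (R : SetRel M M') (S : SetRel N N') : SetRel (M ⊕ N) (M' ⊕ N') :=
  {q | Sum.LiftRel (fun x y => (x, y) ∈ R) (fun x y => (x, y) ∈ S) q.1 q.2}

variable {R : SetRel M M'} {S : SetRel N N'}

theorem insert_inl_sumPosition_subset (x : M) (y : M') :
    insert (.inl x, .inl y) (sumPosition R S) ⊆ sumPosition (insert (x, y) R) S :=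
  Set.insert_subset (.inl (.inl rfl)) fun _ hq => hq.mono (fun _ _ => .inr) fun _ _ => id

theorem insert_inr_sumPosition_subset (x : N) (y : N') :
    insert (.inr x, .inr y) (sumPosition R S) ⊆ sumPosition R (insert (x, y) S) :=
  Set.insert_subset (.inr (.inl rfl)) fun _ hq => hq.mono (fun _ _ => id) fun _ _ => .inr

end SumPosition

instance : Lle.IsRelational := fun _ => inferInstanceAs (IsEmpty Empty)

instance : Finite (Σ n, Lle.Relations n) :=
  .of_surjective (Bool.rec ⟨2, leRel.adj⟩ ⟨2, leRel.le⟩)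
    fun | ⟨_, .adj⟩ => ⟨false, rfl⟩ | ⟨_, .le⟩ => ⟨true, rfl⟩

variable {M M' N N' P : Type*} [Lle.Structure M] [Lle.Structure M'] [Lle.Structure N]
  [Lle.Structure N'] [Lle.Structure P]

/-- The interpretation of the adjacency predicate of `L≤`. -/
def Adj (x y : M) : Prop := RelMap (L := Lle) leRel.adj ![x, y]

/-- The interpretation of the order predicate of `L≤`. In a general `L≤`-structure it need not
be a linear order. -/
def Le (x y : M) : Prop := RelMap (L := Lle) leRel.le ![x, y]

theorem relMap_adj_iff (x : Fin 2 → M) : RelMap (L := Lle) leRel.adj x ↔ Adj (x 0) (x 1) :=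
  iff_of_eq (congrArg _ (FinVec.etaExpand_eq x).symm)

theorem relMap_le_iff (x : Fin 2 → M) : RelMap (L := Lle) leRel.le x ↔ Le (x 0) (x 1) :=
  iff_of_eq (congrArg _ (FinVec.etaExpand_eq x).symm)

theorem isPartialIso_iff {R : SetRel M N} : IsPartialIso Lle R ↔
    ∀ ⦃x x' y y'⦄, (x, y) ∈ R → (x', y') ∈ R →
      (x = x' ↔ y = y') ∧ (Adj x x' ↔ Adj y y') ∧ (Le x x' ↔ Le y y') := by
  refine ⟨fun h x x' y y' hxy hxy' => ?_, fun h => ⟨fun hxy hxy' => (h hxy hxy').1, ?_⟩⟩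
  · have mem_pair : ∀ i, (![x, x'] i, ![y, y'] i) ∈ R := Fin.forall_fin_two.2 ⟨hxy, hxy'⟩
    exact ⟨h.eq_iff_eq hxy hxy', h.relMap_iff_relMap _ mem_pair, h.relMap_iff_relMap _ mem_pair⟩
  · rintro _ (_ | _) x y hxy
    · rw [relMap_adj_iff, relMap_adj_iff, (h (hxy 0) (hxy 1)).2.1]
    · rw [relMap_le_iff, relMap_le_iff, (h (hxy 0) (hxy 1)).2.2]

/-- A bijection preserving and reflecting adjacency and order, as an isomorphism of
`L≤`-structures. -/
def equivOfAdjLe (f : M ≃ N) (adj_iff : ∀ x y, Adj (f x) (f y) ↔ Adj x y)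
    (le_iff : ∀ x y, Le (f x) (f y) ↔ Le x y) : M ≃[Lle] N where
  toEquiv := f
  map_fun' g := isEmptyElim g
  map_rel' := by
    rintro _ (_ | _) x
    · rw [relMap_adj_iff, relMap_adj_iff]
      exact adj_iff _ _
    · rw [relMap_le_iff, relMap_le_iff]
      exact le_iff _ _

/-- The ordered sum: `M` lies below `N`, and there are no edges between `M` and `N`. -/
instance sumStructure : Lle.Structure (M ⊕ N) where
  funMap f := isEmptyElim f
  RelMap
    | .adj, x => Sum.LiftRel Adj Adj (x 0) (x 1)
    | .le, x => Sum.Lex Le Le (x 0) (x 1)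

theorem adj_sum_iff {x y : M ⊕ N} : Adj x y ↔ Sum.LiftRel Adj Adj x y := Iff.rfl

theorem le_sum_iff {x y : M ⊕ N} : Le x y ↔ Sum.Lex Le Le x y := Iff.rfl

/-- The empty structure, the neutral element of the ordered sum. -/
instance emptyStructure : Lle.Structure PEmpty.{w + 1} where
  funMap f := isEmptyElim f
  RelMap _ _ := False

/-- Associativity of the ordered sum. -/
def sumAssocEquiv : (M ⊕ N) ⊕ P ≃[Lle] M ⊕ (N ⊕ P) :=
  equivOfAdjLe (Equiv.sumAssoc M N P)
    (by rintro ((_ | _) | _) ((_ | _) | _) <;> simp [adj_sum_iff])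
    (by rintro ((_ | _) | _) ((_ | _) | _) <;> simp [le_sum_iff])

/-- The empty structure is right neutral for the ordered sum. -/
def sumEmptyEquiv : M ⊕ PEmpty.{w + 1} ≃[Lle] M :=
  equivOfAdjLe (Equiv.sumEmpty M PEmpty)
    (by rintro (_ | ⟨⟨⟩⟩) (_ | ⟨⟨⟩⟩); simp [adj_sum_iff])
    (by rintro (_ | ⟨⟨⟩⟩) (_ | ⟨⟨⟩⟩); simp [le_sum_iff])

/-- The empty structure is left neutral for the ordered sum. -/
def emptySumEquiv : PEmpty.{w + 1} ⊕ M ≃[Lle] M :=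
  equivOfAdjLe (Equiv.emptySum PEmpty M)
    (by rintro (⟨⟨⟩⟩ | _) (⟨⟨⟩⟩ | _); simp [adj_sum_iff])
    (by rintro (⟨⟨⟩⟩ | _) (⟨⟨⟩⟩ | _); simp [le_sum_iff])

theorem adj_map_iff (f : M ≃[Lle] N) (x y : M) : Adj (f x) (f y) ↔ Adj x y :=
  ((isPartialIso_iff.1 (.graph f)) rfl rfl).2.1.symm

theorem le_map_iff (f : M ≃[Lle] N) (x y : M) : Le (f x) (f y) ↔ Le x y :=
  ((isPartialIso_iff.1 (.graph f)) rfl rfl).2.2.symm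

/-- The ordered sum of two isomorphisms. -/
def sumCongrEquiv (f : M ≃[Lle] M') (g : N ≃[Lle] N') : M ⊕ N ≃[Lle] M' ⊕ N' :=
  equivOfAdjLe (Equiv.sumCongr (f : M ≃ M') (g : N ≃ N'))
    (by rintro (_ | _) (_ | _) <;> simp [adj_sum_iff, adj_map_iff])
    (by rintro (_ | _) (_ | _) <;> simp [le_sum_iff, le_map_iff])

variable {k : ℕ} {R : SetRel M M'} {S : SetRel N N'}

theorem IsPartialIso.sum (hR : IsPartialIso Lle R) (hS : IsPartialIso Lle S) :
    IsPartialIso Lle (sumPosition R S) := by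
  rw [isPartialIso_iff] at *
  rintro _ _ _ _ (h | h) (h' | h')
  · simpa [adj_sum_iff, le_sum_iff] using hR h h'
  · simp [adj_sum_iff, le_sum_iff]
  · simp [adj_sum_iff, le_sum_iff]
  · simpa [adj_sum_iff, le_sum_iff] using hS h h'

theorem DuplicatorWins.sum (hR : DuplicatorWins Lle k R) (hS : DuplicatorWins Lle k S) :
    DuplicatorWins Lle k (sumPosition R S) := by
  induction k generalizing R S with
  | zero => exact IsPartialIso.sum hR hS
  | succ k ih =>
    refine ⟨hR.isPartialIso.sum hS.isPartialIso, ?_, ?_⟩ <;> rintro (x | x)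
    · obtain ⟨y, h⟩ := hR.2.1 x
      exact ⟨.inl y, (ih h hS.of_succ).anti (insert_inl_sumPosition_subset x y)⟩
    · obtain ⟨y, h⟩ := hS.2.1 x
      exact ⟨.inr y, (ih hR.of_succ h).anti (insert_inr_sumPosition_subset x y)⟩
    · obtain ⟨y, h⟩ := hR.2.2 x
      exact ⟨.inl y, (ih h hS.of_succ).anti (insert_inl_sumPosition_subset y x)⟩
    · obtain ⟨y, h⟩ := hS.2.2 x
      exact ⟨.inr y, (ih hR.of_succ h).anti (insert_inr_sumPosition_subset y x)⟩

/-- The classes of `L≤`-structures form a monoid under the ordered sum. -/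
instance gameClassMonoid (k : ℕ) : Monoid (GameClass.{0, 0, w} Lle k) where
  mul := Quotient.map₂ (fun M N => .of (M ⊕ N)) fun _ _ h _ _ h' =>
    (h.sum h').anti (Set.empty_subset _)
  one := gameClass k (.of PEmpty)
  mul_assoc := by
    rintro ⟨M⟩ ⟨N⟩ ⟨P⟩
    exact gameClass_eq_of_equiv (sumAssocEquiv (M := M) (N := N) (P := P))
  one_mul := by
    rintro ⟨M⟩
    exact gameClass_eq_of_equiv (emptySumEquiv (M := M))
  mul_one := by
    rintro ⟨M⟩
    exact gameClass_eq_of_equiv (sumEmptyEquiv (M := M))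

theorem gameClass_sum (k : ℕ) (M N : Bundled.{w} Lle.Structure) :
    gameClass k (.of (M ⊕ N)) = gameClass k M * gameClass k N := rfl

theorem gameClass_eq_one (k : ℕ) (M : Bundled.{w} Lle.Structure) [IsEmpty M] :
    gameClass k M = 1 :=
  gameClass_eq_of_equiv (equivOfAdjLe (Equiv.equivPEmpty M) isEmptyElim isEmptyElim)

end OrderedSum

section Aperiodicity

universe w

open CategoryTheory (Bundled)

/-- The ordered sum of `n` copies of `M`. -/
def copies (M : Bundled.{w} Lle.Structure) : ℕ → Bundled.{w} Lle.Structure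
  | 0 => .of PEmpty
  | n + 1 => .of (copies M n ⊕ M)

variable (M : Bundled.{w} Lle.Structure)

theorem gameClass_copies (k n : ℕ) : gameClass k (copies M n) = gameClass k M ^ n := by
  induction n with
  | zero => rfl
  | succ n ih => rw [pow_succ, ← ih, ← gameClass_sum]; rfl

/-- `i + 1 + j` copies of `M` with the copy number `i` singled out. -/
def copiesSplitEquiv (i : ℕ) : ∀ j, copies M (i + 1 + j) ≃[Lle] (copies M i ⊕ M) ⊕ copies M j
  | 0 => sumEmptyEquiv.symm
  | j + 1 => sumAssocEquiv.comp (sumCongrEquiv (copiesSplitEquiv i j) (.refl Lle M))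

variable {M} in
theorem exists_copiesSplitEquiv_eq {n : ℕ} (x : copies M n) :
    ∃ (i j : ℕ) (h : i + 1 + j = n) (m : M), copiesSplitEquiv M i j (h ▸ x) = .inl (.inr m) := by
  induction n with
  | zero => exact x.elim
  | succ n ih =>
    obtain x | m := x
    · obtain ⟨i, j, rfl, m, hm⟩ := ih x
      refine ⟨i, j + 1, rfl, m, ?_⟩
      change Equiv.sumAssoc _ _ _ (.inl (copiesSplitEquiv M i j x)) = _
      rw [hm]
      rfl
    · exact ⟨n, 0, rfl, m, rfl⟩

/-- A sufficient condition for Duplicator to win the `k`-round game on the ordered sums of `n` and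
`n'` copies of a structure. -/
def CopiesEquivalent (k n n' : ℕ) : Prop := n = n' ∨ 2 ^ k ≤ n + 1 ∧ 2 ^ k ≤ n' + 1

theorem CopiesEquivalent.exists_split {k i j n' : ℕ} (h : CopiesEquivalent (k + 1) (i + 1 + j) n') :
    ∃ i' j', i' + 1 + j' = n' ∧ CopiesEquivalent k i i' ∧ CopiesEquivalent k j j' := by
  simp only [CopiesEquivalent] at *
  have hpos : 0 < 2 ^ k := by positivity
  rw [pow_succ] at h
  generalize 2 ^ k = t at *
  obtain rfl | hlarge := h
  · exact ⟨i, j, rfl, .inl rfl, .inl rfl⟩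
  by_cases hi : i + 1 < t
  · exact ⟨i, n' - 1 - i, by omega, by omega, by omega⟩
  by_cases hj : j + 1 < t
  · exact ⟨n' - 1 - j, j, by omega, by omega, by omega⟩
  · exact ⟨t - 1, n' - t, by omega, by omega, by omega⟩

theorem CopiesEquivalent.symm {k n n' : ℕ} (h : CopiesEquivalent k n n') :
    CopiesEquivalent k n' n := h.imp Eq.symm And.symm

variable {k : ℕ}

theorem exists_duplicatorWins_copies_singleton
    (ih : ∀ n n', CopiesEquivalent k n n' →
      DuplicatorWins Lle k (∅ : SetRel (copies M n) (copies M n')))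
    {n n' : ℕ} (h : CopiesEquivalent (k + 1) n n') (x : copies M n) :
    ∃ y : copies M n', DuplicatorWins Lle k {(x, y)} := by
  obtain ⟨i, j, rfl, m, hx⟩ := exists_copiesSplitEquiv_eq x
  obtain ⟨i', j', rfl, hi, hj⟩ := h.exists_split
  have hsum := ((ih i i' hi).sum (.graph (.refl Lle M) k)).sum (ih j j' hj)
  have hcopies := ((DuplicatorWins.graph (copiesSplitEquiv M i j) k).comp hsum).comp
    (.graph (copiesSplitEquiv M i' j').symm k)
  refine ⟨(copiesSplitEquiv M i' j').symm (.inl (.inr m)), hcopies.anti ?_⟩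
  exact Set.singleton_subset_iff.2
    ⟨.inl (.inr m), ⟨.inl (.inr m), hx, .inl (.inr rfl)⟩, rfl⟩

theorem duplicatorWins_copies {n n' : ℕ} (h : CopiesEquivalent k n n') :
    DuplicatorWins Lle k (∅ : SetRel (copies M n) (copies M n')) := by
  induction k generalizing n n' with
  | zero => exact isPartialIso_iff.2 fun _ _ _ _ hxy => hxy.elim
  | succ k ih =>
    have singleton (x y) : insert (x, y) (∅ : SetRel (copies M n) (copies M n')) = {(x, y)} :=
      LawfulSingleton.insert_empty_eq _
    refine ⟨isPartialIso_iff.2 fun _ _ _ _ hxy => hxy.elim, fun x => ?_, fun y => ?_⟩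
    · simp only [singleton]
      exact exists_duplicatorWins_copies_singleton M (fun _ _ => ih) h x
    · obtain ⟨x, hxy⟩ := exists_duplicatorWins_copies_singleton M (fun _ _ => ih) h.symm y
      refine ⟨x, hxy.inv.anti ?_⟩
      rw [singleton, Set.singleton_subset_iff]
      rfl

theorem gameClass_pow_succ_eq_pow (c : GameClass.{0, 0, w} Lle k) :
    c ^ (2 ^ k + 1) = c ^ 2 ^ k := by
  obtain ⟨M⟩ := c
  change gameClass k M ^ _ = gameClass k M ^ _
  rw [← gameClass_copies, ← gameClass_copies, gameClass_eq_iff]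
  exact duplicatorWins_copies M (.inr ⟨by omega, by omega⟩)

end Aperiodicity

/-! ### Finite aperiodic monoids -/

section AperiodicMonoid

variable {S : Type*} [Monoid S] {a b z : S} {n : ℕ}

theorem pow_mul_mul_pow_eq_self (h : a * z * b = z) (m : ℕ) : a ^ m * z * b ^ m = z := by
  induction m with
  | zero => simp
  | succ m ih =>
    calc a ^ (m + 1) * z * b ^ (m + 1) = a ^ m * (a * z * b) * b ^ m := by
          rw [pow_succ a, pow_succ' b]; simp only [mul_assoc]
      _ = z := by rw [h, ih]

theorem mul_right_eq_self_of_pow_succ_eq_pow (h : a * z * b = z) (hb : b ^ (n + 1) = b ^ n) :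
    z * b = z := by
  have hz := pow_mul_mul_pow_eq_self h n
  calc z * b = a ^ n * z * b ^ (n + 1) := by rw [pow_succ, ← mul_assoc, hz]
    _ = z := by rw [hb, hz]

theorem mul_left_eq_self_of_pow_succ_eq_pow (h : a * z * b = z) (ha : a ^ (n + 1) = a ^ n) :
    a * z = z := by
  have hz := pow_mul_mul_pow_eq_self h n
  calc a * z = a ^ (n + 1) * z * b ^ n := by rw [pow_succ', mul_assoc a, mul_assoc a, hz]
    _ = z := by rw [ha, hz]

theorem exists_mem_minimal_ideal [Finite S] : ∃ z : S, ∀ t, ∃ u v, u * (z * t * z) * v = z := by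
  let ideal (z : S) : Set S := {x | ∃ u v, u * z * v = x}
  obtain ⟨z, hmin⟩ := Finite.exists_min fun z => (ideal z).ncard
  refine ⟨z, fun t => ?_⟩
  have hsub : ideal (z * t * z) ⊆ ideal z := by
    rintro _ ⟨u, v, rfl⟩
    exact ⟨u * z * t, v, by simp only [mul_assoc]⟩
  have hideal : ideal (z * t * z) = ideal z :=
    Set.eq_of_subset_of_ncard_le hsub (hmin _) (Set.toFinite _)
  exact hideal.ge ⟨1, 1, by simp⟩

-- From `u * z * t * z * v = z`, aperiodicity lets us cancel first `v` and then `u`.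
theorem exists_forall_mul_mul_eq_self [Finite S] (hpow : ∀ x : S, x ^ (n + 1) = x ^ n) :
    ∃ z : S, ∀ t, z * t * z = z := by
  obtain ⟨z, hz⟩ := exists_mem_minimal_ideal (S := S)
  refine ⟨z, fun t => ?_⟩
  obtain ⟨u, v, huv⟩ := hz t
  have hv : z * v = z :=
    mul_right_eq_self_of_pow_succ_eq_pow (a := u * z * t)
      (by simpa only [mul_assoc] using huv) (hpow v)
  have hu : u * z = z :=
    mul_left_eq_self_of_pow_succ_eq_pow (b := t * z * v)
      (by simpa only [mul_assoc] using huv) (hpow u)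
  calc z * t * z = u * z * t * (z * v) := by rw [hu, hv]
    _ = u * (z * t * z) * v := by simp only [mul_assoc]
    _ = z := huv

end AperiodicMonoid

/-! ### Concatenation of outcomes -/

section Concatenation

open CategoryTheory (Bundled)

variable {a b n : ℕ}

theorem castAdd_lt_natAdd (i : Fin a) (j : Fin b) : Fin.castAdd b i < Fin.natAdd a j :=
  Nat.lt_add_right _ i.isLt

theorem natAdd_ne_castAdd (i : Fin a) (j : Fin b) : Fin.natAdd a j ≠ Fin.castAdd b i :=
  (castAdd_lt_natAdd i j).ne'

theorem castAdd_ne_natAdd (i : Fin a) (j : Fin b) : Fin.castAdd b i ≠ Fin.natAdd a j :=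
  (castAdd_lt_natAdd i j).ne

/-- The potential edges of a graph on `[a + b]` inside the first block, inside the second block,
and between the blocks. -/
def edgeOfSum : EdgeIdx a ⊕ EdgeIdx b ⊕ Fin a × Fin b → EdgeIdx (a + b)
  | .inl e => ⟨(Fin.castAdd b e.1.1, Fin.castAdd b e.1.2), e.2⟩
  | .inr (.inl e) => ⟨(Fin.natAdd a e.1.1, Fin.natAdd a e.1.2), Nat.add_lt_add_left e.2 a⟩
  | .inr (.inr (i, j)) => ⟨(Fin.castAdd b i, Fin.natAdd a j), castAdd_lt_natAdd i j⟩

theorem edgeOfSum_injective : Function.Injective (edgeOfSum (a := a) (b := b)) := by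
  rintro (⟨⟨i, j⟩, h⟩ | ⟨⟨i, j⟩, h⟩ | ⟨i, j⟩) (⟨⟨i', j'⟩, h'⟩ | ⟨⟨i', j'⟩, h'⟩ | ⟨i', j'⟩) <;>
    simp [edgeOfSum, castAdd_ne_natAdd, natAdd_ne_castAdd]

theorem edgeOfSum_surjective : Function.Surjective (edgeOfSum (a := a) (b := b)) := by
  rintro ⟨⟨v, w⟩, hvw⟩
  induction v using Fin.addCases <;> induction w using Fin.addCases
  case left.left i j => exact ⟨.inl ⟨(i, j), hvw⟩, rfl⟩
  case left.right i j => exact ⟨.inr (.inr (i, j)), rfl⟩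
  case right.left i j => exact absurd hvw (castAdd_lt_natAdd j i).not_gt
  case right.right i j => exact ⟨.inr (.inl ⟨(i, j), (Fin.natAdd_lt_natAdd_iff a).1 hvw⟩), rfl⟩

/-- The partition of the potential edges on `[a + b]` described by `edgeOfSum`. -/
noncomputable def edgeSumEquiv : EdgeIdx a ⊕ EdgeIdx b ⊕ Fin a × Fin b ≃ EdgeIdx (a + b) :=
  .ofBijective edgeOfSum ⟨edgeOfSum_injective, edgeOfSum_surjective⟩

/-- The outcome on `[a + b]` that is `ω` on the first `a` vertices and `ω'` on the last `b`
vertices and has no edges between the two blocks. -/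
noncomputable def concat (ω : Sample a) (ω' : Sample b) : Sample (a + b) :=
  Sum.elim ω (Sum.elim ω' fun _ => false) ∘ edgeSumEquiv.symm

theorem concat_edgeOfSum (ω : Sample a) (ω' : Sample b)
    (e : EdgeIdx a ⊕ EdgeIdx b ⊕ Fin a × Fin b) :
    concat ω ω' (edgeOfSum e) = Sum.elim ω (Sum.elim ω' fun _ => false) e :=
  congrArg _ (edgeSumEquiv.symm_apply_apply e)

theorem concat_right_injective (ω : Sample a) : Function.Injective (concat (b := b) ω) :=
  fun ω₁ ω₂ h => funext fun e => by
    simpa only [concat_edgeOfSum, Sum.elim_inl, Sum.elim_inr] using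
      congrFun h (edgeOfSum (.inr (.inl e)))

theorem concat_left_injective (ω' : Sample b) :
    Function.Injective fun ω : Sample a => concat ω ω' :=
  fun ω₁ ω₂ h => funext fun e => by
    simpa only [concat_edgeOfSum, Sum.elim_inl, Sum.elim_inr] using congrFun h (edgeOfSum (.inl e))

/-- The probability that `G(a + b, p̄)` has no edge between its first `a` and its last `b`
vertices. -/
noncomputable def crossWeight (p : ℕ → ℝ) (a b : ℕ) : ℝ :=
  ∏ i : Fin a, ∏ j : Fin b, (1 - p (a + j - i))

theorem sampleWeight_concat (p : ℕ → ℝ) (ω : Sample a) (ω' : Sample b) :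
    sampleWeight p (concat ω ω') = sampleWeight p ω * sampleWeight p ω' * crossWeight p a b := by
  have edgeSumEquiv_apply (e : EdgeIdx a ⊕ EdgeIdx b ⊕ Fin a × Fin b) :
    edgeSumEquiv e = edgeOfSum e := rfl
  rw [sampleWeight, ← edgeSumEquiv.prod_comp]
  simp only [edgeSumEquiv_apply, concat_edgeOfSum, Fintype.prod_sum_type, Fintype.prod_prod_type]
  rw [mul_assoc]
  refine congrArg₂ _ rfl (congrArg₂ _ ?_ ?_)
  · simp [edgeOfSum, sampleWeight, Nat.add_sub_add_left]
  · simp [edgeOfSum, crossWeight]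

theorem sampleAdj_iff {ω : Sample n} {v w : Fin n} :
    sampleAdj ω v w ↔ ∃ e, ω e = true ∧ (e.1 = (v, w) ∨ e.1 = (w, v)) := by
  simp only [sampleAdj, adjVal, Prod.ext_iff, Fin.ext_iff]

/-- An outcome of the random graph as a bundled `L≤`-structure. -/
def sampleModel (ω : Sample n) : Bundled.{0} Lle.Structure := ⟨Fin n, leStructure ω⟩

theorem sampleAdj_concat_iff (ω : Sample a) (ω' : Sample b) (x y : Fin a ⊕ Fin b) :
    sampleAdj (concat ω ω') (finSumFinEquiv x) (finSumFinEquiv y) ↔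
      Sum.LiftRel (sampleAdj ω) (sampleAdj ω') x y := by
  simp only [sampleAdj_iff, edgeOfSum_surjective.exists, concat_edgeOfSum, Sum.exists]
  rcases x with x | x <;> rcases y with y | y <;>
    simp [edgeOfSum, sampleAdj_iff, castAdd_ne_natAdd, natAdd_ne_castAdd]

theorem finSumFinEquiv_le_iff (x y : Fin a ⊕ Fin b) :
    finSumFinEquiv x ≤ finSumFinEquiv y ↔ Sum.Lex (· ≤ ·) (· ≤ ·) x y := by
  rcases x with x | x <;> rcases y with y | y <;>
    simp [(Fin.strictMono_castAdd b).le_iff_le, (castAdd_lt_natAdd _ _).le,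
      (castAdd_lt_natAdd _ _).not_ge]

/-- Concatenation of outcomes is the ordered sum of structures. -/
noncomputable def concatEquiv (ω : Sample a) (ω' : Sample b) :
    sampleModel ω ⊕ sampleModel ω' ≃[Lle] sampleModel (concat ω ω') :=
  equivOfAdjLe finSumFinEquiv (sampleAdj_concat_iff ω ω') finSumFinEquiv_le_iff

theorem gameClass_concat (k : ℕ) (ω : Sample a) (ω' : Sample b) :
    gameClass k (sampleModel (concat ω ω')) =
      gameClass k (sampleModel ω) * gameClass k (sampleModel ω') :=
  (gameClass_eq_of_equiv (concatEquiv ω ω')).symm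

end Concatenation

/-! ### Probability estimates -/

section Probability

variable {p : ℕ → ℝ} {n : ℕ}

theorem sampleWeight_nonneg (hp : ∀ i, p i ∈ Set.Icc 0 1) (ω : Sample n) :
    0 ≤ sampleWeight p ω := by
  refine Finset.prod_nonneg fun e _ => ?_
  split_ifs
  exacts [(hp _).1, sub_nonneg.2 (hp _).2]

theorem sum_sampleWeight (p : ℕ → ℝ) (n : ℕ) : ∑ ω : Sample n, sampleWeight p ω = 1 := by
  let edgeWeight (e : EdgeIdx n) (present : Bool) : ℝ :=
    if present then p (e.1.2 - e.1.1) else 1 - p (e.1.2 - e.1.1)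
  calc ∑ ω : Sample n, sampleWeight p ω = ∏ e, ∑ present, edgeWeight e present :=
        (Fintype.prod_sum edgeWeight).symm
    _ = 1 := by simp [edgeWeight]

theorem Pr_nonneg (hp : ∀ i, p i ∈ Set.Icc 0 1) (P : Sample n → Prop) : 0 ≤ Pr p n P := by
  refine Finset.sum_nonneg fun ω _ => ?_
  split_ifs
  exacts [sampleWeight_nonneg hp ω, le_rfl]

theorem Pr_mono (hp : ∀ i, p i ∈ Set.Icc 0 1) {P Q : Sample n → Prop} (h : ∀ ω, P ω → Q ω) :
    Pr p n P ≤ Pr p n Q := by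
  refine Finset.sum_le_sum fun ω _ => ?_
  split_ifs with hP hQ hQ
  exacts [le_rfl, absurd (h ω hP) hQ, sampleWeight_nonneg hp ω, le_rfl]

theorem Pr_not (p : ℕ → ℝ) (P : Sample n → Prop) : Pr p n (fun ω => ¬ P ω) = 1 - Pr p n P := by
  simp only [Pr, ← sum_sampleWeight p n, ← Finset.sum_sub_distrib]
  refine Finset.sum_congr rfl fun ω _ => ?_
  by_cases h : P ω <;> simp [h]

theorem Pr_le_one (hp : ∀ i, p i ∈ Set.Icc 0 1) (P : Sample n → Prop) : Pr p n P ≤ 1 :=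
  sub_nonneg.1 (Pr_not p P ▸ Pr_nonneg hp _)

theorem le_Pr_of_injective (hp : ∀ i, p i ∈ Set.Icc 0 1) {m : ℕ} {f : Sample m → Sample n}
    (hf : Function.Injective f) {P : Sample n → Prop} {δ : ℝ}
    (hP : ∀ t, 0 < sampleWeight p t → P (f t))
    (hδ : ∀ t, δ * sampleWeight p t ≤ sampleWeight p (f t)) : δ ≤ Pr p n P := by
  classical
  let weightOnEvent (ω : Sample n) : ℝ := if P ω then sampleWeight p ω else 0
  have nonneg (ω) : 0 ≤ weightOnEvent ω := by
    dsimp only [weightOnEvent]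
    split_ifs
    exacts [sampleWeight_nonneg hp ω, le_rfl]
  calc δ = ∑ t : Sample m, δ * sampleWeight p t := by
        rw [← Finset.mul_sum, sum_sampleWeight, mul_one]
    _ ≤ ∑ t, weightOnEvent (f t) := by
        refine Finset.sum_le_sum fun t _ => ?_
        obtain ht | ht := (sampleWeight_nonneg hp t).eq_or_lt
        · simpa only [← ht, mul_zero] using nonneg (f t)
        · simpa only [weightOnEvent, if_pos (hP t ht)] using hδ t
    _ = ∑ ω ∈ Finset.univ.image f, weightOnEvent ω :=
        (Finset.sum_image fun _ _ _ _ h => hf h).symm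
    _ ≤ ∑ ω, weightOnEvent ω :=
        Finset.sum_le_univ_sum_of_nonneg nonneg
    _ = Pr p n P := Finset.sum_congr rfl fun ω _ => by simp only [weightOnEvent]

section ProductBound

variable {ι κ : Type*} [Fintype ι] [Fintype κ] {c : ℝ}

theorem le_prod_one_sub_of_injective (hp : ∀ i, p i ∈ Set.Icc 0 1)
    (hc : ∀ n, c ≤ ∏ i ∈ Finset.Icc 1 n, (1 - p i)) {f : ι → ℕ} (hf : Function.Injective f)
    (hf_pos : ∀ i, 1 ≤ f i) : c ≤ ∏ i, (1 - p (f i)) := by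
  classical
  have hsub : Finset.univ.image f ⊆ Finset.Icc 1 (Finset.univ.sup f) := by
    intro d hd
    obtain ⟨i, -, rfl⟩ := Finset.mem_image.1 hd
    exact Finset.mem_Icc.2 ⟨hf_pos i, Finset.le_sup (Finset.mem_univ i)⟩
  calc c ≤ ∏ d ∈ Finset.Icc 1 (Finset.univ.sup f), (1 - p d) := hc _
    _ ≤ ∏ d ∈ Finset.univ.image f, (1 - p d) :=
      Finset.prod_le_prod_of_subset_of_le_one hsub (fun d _ => sub_nonneg.2 (hp d).2)
        fun d _ _ => sub_le_self _ (hp d).1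
    _ = ∏ i, (1 - p (f i)) := Finset.prod_image fun _ _ _ _ h => hf h

theorem pow_card_le_prod_prod_one_sub (hp : ∀ i, p i ∈ Set.Icc 0 1) (hc0 : 0 ≤ c)
    (hc : ∀ n, c ≤ ∏ i ∈ Finset.Icc 1 n, (1 - p i)) {f : ι → κ → ℕ}
    (hf : ∀ i, Function.Injective (f i)) (hf_pos : ∀ i j, 1 ≤ f i j) :
    c ^ Fintype.card ι ≤ ∏ i, ∏ j, (1 - p (f i j)) :=
  calc c ^ Fintype.card ι = ∏ _i : ι, c := (Finset.prod_const c).symm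
    _ ≤ ∏ i, ∏ j, (1 - p (f i j)) := Finset.prod_le_prod (fun _ _ => hc0) fun i _ =>
      le_prod_one_sub_of_injective hp hc (hf i) (hf_pos i)

theorem pow_left_le_crossWeight (hp : ∀ i, p i ∈ Set.Icc 0 1) (hc0 : 0 ≤ c)
    (hc : ∀ n, c ≤ ∏ i ∈ Finset.Icc 1 n, (1 - p i)) (a b : ℕ) : c ^ a ≤ crossWeight p a b := by
  have hcross := pow_card_le_prod_prod_one_sub hp hc0 hc
    (f := fun (i : Fin a) (j : Fin b) => a + j - i)
    (fun i j j' h => Fin.ext (by lia)) (fun i j => by lia)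
  rwa [Fintype.card_fin] at hcross

theorem pow_right_le_crossWeight (hp : ∀ i, p i ∈ Set.Icc 0 1) (hc0 : 0 ≤ c)
    (hc : ∀ n, c ≤ ∏ i ∈ Finset.Icc 1 n, (1 - p i)) (a b : ℕ) : c ^ b ≤ crossWeight p a b := by
  have hcross := pow_card_le_prod_prod_one_sub hp hc0 hc
    (f := fun (j : Fin b) (i : Fin a) => a + j - i)
    (fun j i i' h => Fin.ext (by lia)) (fun j i => by lia)
  rwa [Fintype.card_fin, Finset.prod_comm] at hcross

end ProductBound

end Probability

/-! ### A class of asymptotically positive probability -/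

section RecurringClass

variable {p : ℕ → ℝ} {c : ℝ} {a b : ℕ}

theorem sampleWeight_concat_pos (hp : ∀ i, p i ∈ Set.Icc 0 1) (hc0 : 0 < c)
    (hc : ∀ n, c ≤ ∏ i ∈ Finset.Icc 1 n, (1 - p i)) {ω : Sample a} {ω' : Sample b}
    (hω : 0 < sampleWeight p ω) (hω' : 0 < sampleWeight p ω') :
    0 < sampleWeight p (concat ω ω') := by
  rw [sampleWeight_concat]
  exact mul_pos (mul_pos hω hω')
    ((pow_pos hc0 a).trans_le (pow_left_le_crossWeight hp hc0.le hc a b))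

theorem gameClass_sampleModel_zero (k : ℕ) (ω : Sample 0) : gameClass k (sampleModel ω) = 1 :=
  have : IsEmpty (sampleModel ω) := inferInstanceAs (IsEmpty (Fin 0))
  gameClass_eq_one k (sampleModel ω)

/-- The `k`-round game classes that `G(n, p̄)` has with positive probability for some `n`. -/
def positiveClasses (hp : ∀ i, p i ∈ Set.Icc 0 1) (hc0 : 0 < c)
    (hc : ∀ n, c ≤ ∏ i ∈ Finset.Icc 1 n, (1 - p i)) (k : ℕ) :
    Submonoid (GameClass.{0, 0, 0} Lle k) where
  carrier := {x | ∃ n, ∃ ω : Sample n, 0 < sampleWeight p ω ∧ gameClass k (sampleModel ω) = x}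
  one_mem' := ⟨0, fun _ => false, by simp [sampleWeight], gameClass_sampleModel_zero k _⟩
  mul_mem' := by
    rintro _ _ ⟨_, ω, hω, rfl⟩ ⟨_, ω', hω', rfl⟩
    exact ⟨_, concat ω ω', sampleWeight_concat_pos hp hc0 hc hω hω', gameClass_concat k ω ω'⟩

theorem exists_forall_gameClass_concat_concat_eq (hp : ∀ i, p i ∈ Set.Icc 0 1) (hc0 : 0 < c)
    (hc : ∀ n, c ≤ ∏ i ∈ Finset.Icc 1 n, (1 - p i)) (k : ℕ) :
    ∃ (a : ℕ) (ω : Sample a), 0 < sampleWeight p ω ∧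
      ∀ (b : ℕ) (t : Sample b), 0 < sampleWeight p t →
        gameClass k (sampleModel (concat ω (concat t ω))) = gameClass k (sampleModel ω) := by
  have hpow (x : positiveClasses hp hc0 hc k) : x ^ (2 ^ k + 1) = x ^ 2 ^ k :=
    Subtype.ext (gameClass_pow_succ_eq_pow x.1)
  obtain ⟨⟨_, a, ω, hω, rfl⟩, hz⟩ := exists_forall_mul_mul_eq_self hpow
  refine ⟨a, ω, hω, fun b t ht => ?_⟩
  rw [gameClass_concat, gameClass_concat, ← mul_assoc]
  exact congrArg Subtype.val (hz ⟨_, b, t, ht, rfl⟩)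

theorem mul_le_sampleWeight_concat_concat (hp : ∀ i, p i ∈ Set.Icc 0 1) (hc0 : 0 ≤ c)
    (hc : ∀ n, c ≤ ∏ i ∈ Finset.Icc 1 n, (1 - p i)) (ω : Sample a) (t : Sample b) :
    (sampleWeight p ω * c ^ a) ^ 2 * sampleWeight p t ≤
      sampleWeight p (concat ω (concat t ω)) := by
  have hleft : c ^ a ≤ crossWeight p a (b + a) := pow_left_le_crossWeight hp hc0 hc a (b + a)
  have hright : c ^ a ≤ crossWeight p b a := pow_right_le_crossWeight hp hc0 hc b a
  have hω := sampleWeight_nonneg hp ω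
  have ht := sampleWeight_nonneg hp t
  calc (sampleWeight p ω * c ^ a) ^ 2 * sampleWeight p t
      = sampleWeight p ω * (sampleWeight p t * sampleWeight p ω * c ^ a) * c ^ a := by ring
    _ ≤ sampleWeight p ω * (sampleWeight p t * sampleWeight p ω * crossWeight p b a) *
          crossWeight p a (b + a) := by
        have := (pow_nonneg hc0 a).trans hright
        gcongr
    _ = sampleWeight p (concat ω (concat t ω)) := by rw [sampleWeight_concat, sampleWeight_concat]

theorem exists_eventually_le_Pr_gameClass_eq (hp : ∀ i, p i ∈ Set.Icc 0 1) (hc0 : 0 < c)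
    (hc : ∀ n, c ≤ ∏ i ∈ Finset.Icc 1 n, (1 - p i)) (k : ℕ) :
    ∃ (a : ℕ) (ω : Sample a), ∃ δ > 0, ∀ᶠ n in atTop,
      δ ≤ Pr p n fun ω' => gameClass k (sampleModel ω') = gameClass k (sampleModel ω) := by
  obtain ⟨a, ω, hω, hclass⟩ := exists_forall_gameClass_concat_concat_eq hp hc0 hc k
  refine ⟨a, ω, (sampleWeight p ω * c ^ a) ^ 2, by positivity,
    eventually_atTop.2 ⟨a + a, fun n hn => ?_⟩⟩
  obtain ⟨b, rfl⟩ : ∃ b, n = a + (b + a) := ⟨n - (a + a), by lia⟩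
  exact le_Pr_of_injective hp ((concat_right_injective ω).comp (concat_left_injective ω))
    (hclass b) (mul_le_sampleWeight_concat_concat hp hc0.le hc ω)

theorem exists_eventually_le_ProbLe_or_ProbLe_le (hp : ∀ i, p i ∈ Set.Icc 0 1) (hc0 : 0 < c)
    (hc : ∀ n, c ≤ ∏ i ∈ Finset.Icc 1 n, (1 - p i)) (ψ : Lle.Sentence) :
    ∃ δ > 0, (∀ᶠ n in atTop, δ ≤ ProbLe p n ψ) ∨ ∀ᶠ n in atTop, ProbLe p n ψ ≤ 1 - δ := by
  obtain ⟨a, ω, δ, hδ, hPr⟩ :=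
    exists_eventually_le_Pr_gameClass_eq hp hc0 hc (quantifierRank ψ)
  have sat_iff {n : ℕ} {ω' : Sample n} (h : gameClass (quantifierRank ψ) (sampleModel ω') =
      gameClass (quantifierRank ψ) (sampleModel ω)) : SatLe ω' ψ ↔ SatLe ω ψ :=
    realize_iff_of_gameClass_eq h
  refine ⟨δ, hδ, (em (SatLe ω ψ)).imp (fun hω => ?_) fun hω => ?_⟩
  · filter_upwards [hPr] with n hn
    exact hn.trans (Pr_mono hp fun ω' h => (sat_iff h).2 hω)
  · filter_upwards [hPr] with n hn
    have hnot : δ ≤ Pr p n fun ω' => ¬ SatLe ω' ψ :=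
      hn.trans (Pr_mono hp fun ω' h => mt (sat_iff h).1 hω)
    exact le_sub_comm.1 (Pr_not p _ ▸ hnot)

end RecurringClass

theorem limsup_sub_liminf_lt_one {ι : Type*} {l : Filter ι} [l.NeBot] {u : ι → ℝ} {δ : ℝ}
    (hu : ∀ i, u i ∈ Set.Icc 0 1) (hδ : 0 < δ)
    (h : (∀ᶠ i in l, δ ≤ u i) ∨ ∀ᶠ i in l, u i ≤ 1 - δ) : limsup u l - liminf u l < 1 := by
  have hbelow : IsBoundedUnder (· ≥ ·) l u := isBoundedUnder_of ⟨0, fun i => (hu i).1⟩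
  have habove : IsBoundedUnder (· ≤ ·) l u := isBoundedUnder_of ⟨1, fun i => (hu i).2⟩
  have le_liminf {x : ℝ} (hx : ∀ᶠ i in l, x ≤ u i) : x ≤ liminf u l :=
    le_liminf_of_le habove.isCoboundedUnder_ge hx
  have limsup_le {x : ℝ} (hx : ∀ᶠ i in l, u i ≤ x) : limsup u l ≤ x :=
    limsup_le_of_le hbelow.isCoboundedUnder_le hx
  obtain h | h := h
  · linarith [le_liminf h, limsup_le (.of_forall fun i => (hu i).2)]
  · linarith [limsup_le h, le_liminf (.of_forall fun i => (hu i).1)]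

/-- If `0 ≤ p i < 1` and `∏_{i=1}^∞ (1 - p i) > 0`, then for every
sentence `ψ` of `L≤`, `limsup Prob(n, p̄; ψ) - liminf Prob(n, p̄; ψ) < 1`. -/
theorem statement_10 (p : ℕ → ℝ) (hp : ∀ i, 0 ≤ p i ∧ p i < 1)
    (hprod : ∃ c : ℝ, 0 < c ∧ ∀ n : ℕ, c ≤ ∏ i ∈ Finset.Icc 1 n, (1 - p i))
    (ψ : Lle.Sentence) :
    limsup (fun n => ProbLe p n ψ) atTop - liminf (fun n => ProbLe p n ψ) atTop < 1 := by
  have hp' (i : ℕ) : p i ∈ Set.Icc 0 1 := ⟨(hp i).1, (hp i).2.le⟩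
  obtain ⟨c, hc0, hc⟩ := hprod
  obtain ⟨δ, hδ, hbound⟩ := exists_eventually_le_ProbLe_or_ProbLe_le hp' hc0 hc ψ
  exact limsup_sub_liminf_lt_one (fun n => ⟨Pr_nonneg hp' _, Pr_le_one hp' _⟩) hδ hbound

end RandomGraph
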